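/- arXiv:1609.06970 — 2 statements merged into one kernel-verified Lean document; each statement's English description precedes it below -/
import Mathlib

section
/- Let ψ_0, ψ ∈ 𝒮(ℝⁿ) satisfy the Tauberian conditions for some ε > 0. Then there exist λ_0, λ ∈ 𝒮(ℝⁿ) with supp 𝓕λ_0 ⊆ {ξ : |ξ|_a < 2ε} and supp 𝓕λ ⊆ {ξ : ε/2 < |ξ|_a < 2ε}, such that for every ξ ∈ ℝⁿ, 𝓕λ_0(ξ)·𝓕ψ_0(ξ) + ∑_{j=1}^∞ 𝓕λ(2^{−ja}ξ)·𝓕ψ(2^{−ja}ξ) = 1, where for each fixed ξ only finitely many terms of the series are nonzero. -/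
open MeasureTheory Complex
open scoped ENNReal NNReal BigOperators

noncomputable section

/-- Points of `ℝⁿ`, written `x = (x 0, …, x (n-1))`. -/
abbrev RV (n : ℕ) := Fin n → ℝ

/-- Tempered distributions `𝒮′(ℝⁿ)`. -/
abbrev TD (n : ℕ) := SchwartzMap (RV n) ℂ →L[ℂ] ℂ

/-- The Fourier transform `𝓕g(ξ) = ∫ e^{-i x·ξ} g(x) dx`. -/
def FT (n : ℕ) (g : RV n → ℂ) (ξ : RV n) : ℂ :=
  ∫ x : RV n, Complex.exp (-Complex.I * ((∑ i, x i * ξ i : ℝ) : ℂ)) * g x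

/-- The partial derivative `∂_i`. -/
def pderiv1 (n : ℕ) (i : Fin n) (g : RV n → ℂ) : RV n → ℂ :=
  fun x => fderiv ℝ g x (Pi.single i 1)

def pderivIter (n : ℕ) (i : Fin n) : ℕ → (RV n → ℂ) → RV n → ℂ
  | 0, g => g
  | k + 1, g => pderiv1 n i (pderivIter n i k g)

/-- `D^α = (-i ∂_1)^{α_1} ⋯ (-i ∂_n)^{α_n}`. -/
def Dop (n : ℕ) (α : Fin n → ℕ) (g : RV n → ℂ) : RV n → ℂ :=
  fun x => (-Complex.I) ^ (∑ i, α i) *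
    ((List.finRange n).foldr (fun i h => pderivIter n i (α i) h) g) x

/-- `anorm` is the anisotropic distance function `|·|_a` :
`anorm 0 = 0`, and for `x ≠ 0`, `anorm x` is the (unique) `t > 0` with
`x 1 ^ 2 / t ^ (2 a 1) + … + x n ^ 2 / t ^ (2 a n) = 1`. -/
def IsAnorm (n : ℕ) (a : Fin n → ℝ) (anorm : RV n → ℝ) : Prop :=
  anorm 0 = 0 ∧
    ∀ x : RV n, x ≠ 0 → 0 < anorm x ∧ ∑ i, (x i : ℝ) ^ 2 / (anorm x) ^ (2 * a i) = 1

/-- Moment condition of order `M` : `D^α (𝓕ψ)(0) = 0` for all `|α| ≤ M` (void for `M = -1`). -/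
def MomentCond (n : ℕ) (M : ℤ) (ψ : RV n → ℂ) : Prop :=
  ∀ α : Fin n → ℕ, (∑ i, (α i : ℤ)) ≤ M → Dop n α (FT n ψ) 0 = 0

/-- Tauberian conditions for `ε > 0` for the pair `(ψ0, ψ)`. -/
def Tauber (n : ℕ) (anorm : RV n → ℝ) (ψ0 ψ : RV n → ℂ) (ε : ℝ) : Prop :=
  (∀ ξ, anorm ξ < 2 * ε → 0 < ‖FT n ψ0 ξ‖) ∧
    (∀ ξ, ε / 2 < anorm ξ → anorm ξ < 2 * ε → 0 < ‖FT n ψ ξ‖)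

/-- The family `φ_j`, `φ_0` at `j = 0` and `φ_j(x) = 2^{j|a|} φ(2^{ja}x)` for `j ≥ 1`. -/
def fam (n : ℕ) (a : Fin n → ℝ) (φ0 φ : RV n → ℂ) : ℕ → RV n → ℂ
  | 0 => φ0
  | j + 1 => fun x =>
      (((2 : ℝ) ^ (((j : ℝ) + 1) * ∑ i, a i) : ℝ) : ℂ) *
        φ (fun i => (2 : ℝ) ^ (((j : ℝ) + 1) * a i) * x i)

/-- Peetre–Fefferman–Stein maximal function attached to the function `F` (intended: `F = ψ_j * f`). -/
def pfs (n : ℕ) (a r : Fin n → ℝ) (F : RV n → ℂ) (j : ℕ) (x : RV n) : ℝ≥0∞ :=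
  ⨆ y : RV n,
    ENNReal.ofReal (‖F y‖ / ∏ l, (1 + (2 : ℝ) ^ ((j : ℝ) * a l) * |x l - y l|) ^ (r l))

/-- Iterated-integral construction of the mixed Lebesgue norm : integrate out the
coordinates one at a time, first `x 0`, last `x (n-1)`. -/
def mixAux (n : ℕ) (p : Fin n → ℝ≥0∞) : ℕ → ((RV n) → ℝ≥0∞) → (RV n) → ℝ≥0∞
  | 0, F => F
  | l + 1, F => fun x =>
      if h : l < n then
        (if p ⟨l, h⟩ = ∞ then
          essSup (fun t : ℝ => mixAux n p l F (Function.update x ⟨l, h⟩ t)) volume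
        else
          (∫⁻ t : ℝ, (mixAux n p l F (Function.update x ⟨l, h⟩ t)) ^ (p ⟨l, h⟩).toReal) ^
            (1 / (p ⟨l, h⟩).toReal))
      else mixAux n p l F x

/-- The mixed Lebesgue quasi-norm `‖F | L_{p̄}‖` of an extended-nonnegative-valued `F`. -/
def mixedNorm (n : ℕ) (p : Fin n → ℝ≥0∞) (F : RV n → ℝ≥0∞) : ℝ≥0∞ :=
  mixAux n p n F fun _ => 0

/-- `‖(u_k) | L_{p̄}(ℓ_q)‖`. -/
def seqNorm (n : ℕ) (p : Fin n → ℝ≥0∞) (q : ℝ≥0∞) (u : ℕ → RV n → ℝ≥0∞) : ℝ≥0∞ :=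
  mixedNorm n p fun x =>
    if q = ∞ then ⨆ k, u k x else (∑' k, u k x ^ q.toReal) ^ (1 / q.toReal)

/-- Convolution of (Schwartz) functions. -/
def conv2 (n : ℕ) (f g : RV n → ℂ) (x : RV n) : ℂ := ∫ y : RV n, f y * g (x - y)

/-- Schwartz seminorm `p_{α,β}(φ) = sup_x |x^α D^β φ(x)|`, valued in `[0,∞]`. -/
def pSemiE (n : ℕ) (α β : Fin n → ℕ) (g : RV n → ℂ) : ℝ≥0∞ :=
  ⨆ x : RV n, (‖((∏ i, x i ^ α i : ℝ) : ℂ) * Dop n β g x‖₊ : ℝ≥0∞)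

/-- Schwartz seminorm `q_{N,γ}(φ) = ∫ (1+|x|²)^{N/2} |D^γ φ(x)| dx`, valued in `[0,∞]`. -/
def qSemiE (n : ℕ) (N : ℝ) (γ : Fin n → ℕ) (g : RV n → ℂ) : ℝ≥0∞ :=
  ∫⁻ x : RV n, ENNReal.ofReal ((1 + ∑ i, (x i) ^ 2) ^ (N / 2)) * (‖Dop n γ g x‖₊ : ℝ≥0∞)

/-- Iterated Laplacian `Δ^N`. -/
def lapIter (n : ℕ) : ℕ → (RV n → ℂ) → RV n → ℂ
  | 0, g => g
  | N + 1, g => fun x => ∑ i, pderiv1 n i (pderiv1 n i (lapIter n N g)) x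

/-- The box `B_{R,j} = {ξ : |ξ_k| ≤ R 2^{j a_k}}`. -/
def specBox (n : ℕ) (a : Fin n → ℝ) (R : ℝ) (j : ℕ) : Set (RV n) :=
  {ξ | ∀ k, |ξ k| ≤ R * (2 : ℝ) ^ ((j : ℝ) * a k)}

/-- The spectral condition `supp 𝓕u ⊆ B_{R,j}` for a temperate-growth function `u`. -/
def SpecCond (n : ℕ) (a : Fin n → ℝ) (R : ℝ) (j : ℕ) (u : RV n → ℂ) : Prop :=
  ∀ φ : SchwartzMap (RV n) ℂ,
    tsupport (⇑φ) ∩ specBox n a R j = ∅ → (∫ x : RV n, u x * FT n (⇑φ) x) = 0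

/-- The maximal function `u^*` of Section 3. -/
def ustar (n : ℕ) (a r : Fin n → ℝ) (R : ℝ) (j : ℕ) (u : RV n → ℂ) (x : RV n) : ℝ≥0∞ :=
  ⨆ y : RV n,
    ENNReal.ofReal (‖u y‖ / ∏ l, (1 + R * (2 : ℝ) ^ ((j : ℝ) * a l) * |x l - y l|) ^ (r l))

/-!
Take a smooth cutoff `φ` with `φ = 1` on `{|ξ|_a ≤ r}` and `φ = 0` on `{|ξ|_a ≥ R}`, where
`ε < r < R < 2ε`, and put `θ(ξ) = φ(ξ) - φ(2^a ξ)`, which lives on `{r/2 ≤ |ξ|_a ≤ R}`. The series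
`∑_{j ≥ 1} θ(2^{-ja}ξ)` telescopes to `1 - φ(ξ)`, because `|2^{-ja}ξ|_a = 2^{-j}|ξ|_a → 0`. The
Tauberian conditions allow us to divide: `φ/𝓕ψ_0` and `θ/𝓕ψ` are smooth with compact support, hence
Fourier transforms of Schwartz functions `λ_0` and `λ`.
-/

open scoped ContDiff FourierTransform Manifold
open Filter Topology Set

section FourierTransform

/-- The change of frequency variable `ξ ↦ ξ / 2π`, from the angular frequency of `FT` to the
frequency in Mathlib's `𝓕`, which lives on Euclidean space. -/
def ordinaryFrequency (n : ℕ) : RV n ≃L[ℝ] EuclideanSpace ℝ (Fin n) :=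
  (ContinuousLinearEquiv.smulLeft (Units.mk0 (2 * Real.pi)⁻¹ (by positivity))).trans
    (EuclideanSpace.equiv (Fin n) ℝ).symm

variable {n : ℕ}

theorem inner_toLp_ordinaryFrequency (x ξ : RV n) :
    inner ℝ (WithLp.toLp 2 x) (ordinaryFrequency n ξ) = (2 * Real.pi)⁻¹ * ∑ i, x i * ξ i := by
  have apply_eq (i : Fin n) : ordinaryFrequency n ξ i = (2 * Real.pi)⁻¹ * ξ i := rfl
  simp only [PiLp.inner_apply, apply_eq, Finset.mul_sum, RCLike.inner_apply, conj_trivial]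
  exact Finset.sum_congr rfl fun i _ => by ring

theorem FT_eq_fourier_comp (g : RV n → ℂ) :
    FT n g = 𝓕 (g ∘ EuclideanSpace.equiv (Fin n) ℝ) ∘ ordinaryFrequency n := by
  funext ξ
  rw [Function.comp_apply, Real.fourier_eq', FT,
    ← (PiLp.volume_preserving_toLp (Fin n)).integral_comp
      (MeasurableEquiv.toLp 2 (Fin n → ℝ)).measurableEmbedding]
  refine integral_congr_ae (Eventually.of_forall fun x => ?_)
  have phase : -2 * Real.pi * inner ℝ (WithLp.toLp 2 x) (ordinaryFrequency n ξ) =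
      -∑ i, x i * ξ i := by
    rw [inner_toLp_ordinaryFrequency]
    field_simp
  have point : EuclideanSpace.equiv (Fin n) ℝ (WithLp.toLp 2 x) = x := rfl
  simp only [phase]
  rw [Function.comp_apply, point, smul_eq_mul, ofReal_neg, neg_mul, neg_mul, mul_comm I]

theorem contDiff_FT (g : SchwartzMap (RV n) ℂ) : ContDiff ℝ ∞ (FT n g) := by
  let G : SchwartzMap (EuclideanSpace ℝ (Fin n)) ℂ :=
    SchwartzMap.compCLMOfContinuousLinearEquiv ℂ (EuclideanSpace.equiv (Fin n) ℝ) g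
  have FT_eq : FT n g = 𝓕 ⇑G ∘ ordinaryFrequency n := FT_eq_fourier_comp g
  rw [FT_eq, ← SchwartzMap.fourier_coe]
  exact (SchwartzMap.smooth _ ⊤).comp (ordinaryFrequency n).contDiff

theorem exists_FT_eq (G : SchwartzMap (RV n) ℂ) : ∃ g : SchwartzMap (RV n) ℂ, FT n g = G := by
  let F : SchwartzMap (EuclideanSpace ℝ (Fin n)) ℂ :=
    SchwartzMap.compCLMOfContinuousLinearEquiv ℂ (ordinaryFrequency n).symm G
  let f : SchwartzMap (EuclideanSpace ℝ (Fin n)) ℂ := 𝓕⁻ F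
  let e := EuclideanSpace.equiv (Fin n) ℝ
  refine ⟨SchwartzMap.compCLMOfContinuousLinearEquiv ℂ e.symm f, ?_⟩
  have comp_eq : ⇑(SchwartzMap.compCLMOfContinuousLinearEquiv ℂ e.symm f) ∘ e = f := by
    funext x
    simp
  rw [FT_eq_fourier_comp, comp_eq, ← SchwartzMap.fourier_coe,
    FourierTransform.fourier_fourierInv_eq]
  funext ξ
  simp [F]

end FourierTransform

section AnisotropicDilation

variable {ι : Type*}

/-- The anisotropic dilation `t^a x = (t^{a_i} x_i)_i` as a linear homeomorphism, for `t > 0`. -/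
def anisoDilation (a : ι → ℝ) {t : ℝ} (ht : 0 < t) : (ι → ℝ) ≃L[ℝ] (ι → ℝ) :=
  .piCongrRight fun i => .smulLeft (Units.mk0 (t ^ a i) (Real.rpow_pos_of_pos ht _).ne')

theorem anisoDilation_apply (a : ι → ℝ) {t : ℝ} (ht : 0 < t) (x : ι → ℝ) (i : ι) :
    anisoDilation a ht x i = t ^ a i * x i := rfl

theorem iterate_anisoDilation_inv (a : ι → ℝ) {t : ℝ} (ht : 0 < t) (j : ℕ) (x : ι → ℝ) :
    (anisoDilation a (inv_pos.2 ht))^[j] x = fun i => t ^ (-(j : ℝ) * a i) * x i := by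
  induction j with
  | zero => simp
  | succ j ih =>
    funext i
    rw [Function.iterate_succ_apply', ih, anisoDilation_apply, Real.inv_rpow ht.le,
      ← Real.rpow_neg ht.le, ← mul_assoc, ← Real.rpow_add ht]
    push_cast
    ring_nf

end AnisotropicDilation

section AnisotropicForm

variable {ι : Type*} [Fintype ι] {a : ι → ℝ}

/-- The form `x ↦ |t^{-a} x|² = ∑ x_i² / t^{2 a_i}`, whose unit level set is the sphere of
radius `t` for the anisotropic distance. -/
def anisoForm (a : ι → ℝ) (t : ℝ) (x : ι → ℝ) : ℝ := ∑ i, x i ^ 2 / t ^ (2 * a i)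

theorem anisoForm_zero_right (a : ι → ℝ) (t : ℝ) : anisoForm a t 0 = 0 := by
  simp [anisoForm]

theorem continuous_anisoForm (a : ι → ℝ) (t : ℝ) : Continuous (anisoForm a t) := by
  unfold anisoForm
  fun_prop

theorem anisoForm_mul_anisoDilation (a : ι → ℝ) {s t : ℝ} (hs : 0 < s) (ht : 0 < t) (x : ι → ℝ) :
    anisoForm a (s * t) (anisoDilation a hs x) = anisoForm a t x := by
  refine Finset.sum_congr rfl fun i _ => ?_
  have hsq : (s ^ a i) ^ 2 = s ^ (2 * a i) := by
    rw [mul_comm, Real.rpow_mul hs.le, Real.rpow_two]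
  rw [anisoDilation_apply, mul_pow, Real.mul_rpow hs.le ht.le, hsq,
    mul_div_mul_left _ _ (by positivity)]

theorem strictAntiOn_anisoForm (ha : ∀ i, 0 < a i) {x : ι → ℝ} (hx : x ≠ 0) :
    StrictAntiOn (fun t => anisoForm a t x) (Ioi 0) := by
  intro s (hs : 0 < s) t (_ : 0 < t) hst
  have rpow_lt (i : ι) : s ^ (2 * a i) < t ^ (2 * a i) :=
    Real.rpow_lt_rpow hs.le hst (mul_pos two_pos (ha i))
  obtain ⟨k, hk : x k ≠ 0⟩ := Function.ne_iff.1 hx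
  refine Finset.sum_lt_sum (fun i _ => ?_) ⟨k, Finset.mem_univ k, ?_⟩
  · exact div_le_div_of_nonneg_left (sq_nonneg _) (by positivity) (rpow_lt i).le
  · exact div_lt_div_of_pos_left (by positivity) (by positivity) (rpow_lt k)

theorem isCompact_anisoForm_le_one (a : ι → ℝ) {t : ℝ} (ht : 0 < t) :
    IsCompact {x | anisoForm a t x ≤ 1} := by
  have box : IsCompact (univ.pi fun i => Icc (-t ^ a i) (t ^ a i)) :=
    isCompact_univ_pi fun i => isCompact_Icc
  refine box.of_isClosed_subset (isClosed_le (continuous_anisoForm a t) continuous_const)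
    fun x hx i _ => abs_le.1 ?_
  have term_le : x i ^ 2 / t ^ (2 * a i) ≤ 1 :=
    (Finset.single_le_sum (f := fun i => x i ^ 2 / t ^ (2 * a i))
      (fun i _ => by positivity) (Finset.mem_univ i)).trans hx
  rw [div_le_one (by positivity), mul_comm, Real.rpow_mul ht.le, Real.rpow_two] at term_le
  exact abs_le_of_sq_le_sq term_le (by positivity)

end AnisotropicForm

namespace IsAnorm

variable {n : ℕ} {a : Fin n → ℝ} {anorm : RV n → ℝ}

theorem pos (h : IsAnorm n a anorm) {x : RV n} (hx : x ≠ 0) : 0 < anorm x := (h.2 x hx).1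

theorem anisoForm_eq_one (h : IsAnorm n a anorm) {x : RV n} (hx : x ≠ 0) :
    anisoForm a (anorm x) x = 1 := (h.2 x hx).2

theorem nonneg (h : IsAnorm n a anorm) (x : RV n) : 0 ≤ anorm x := by
  rcases eq_or_ne x 0 with rfl | hx
  exacts [h.1.ge, (h.pos hx).le]

theorem le_iff_anisoForm_le_one (h : IsAnorm n a anorm) (ha : ∀ i, 0 < a i) {t : ℝ} (ht : 0 < t)
    (x : RV n) : anorm x ≤ t ↔ anisoForm a t x ≤ 1 := by
  rcases eq_or_ne x 0 with rfl | hx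
  · simp [h.1, ht.le, anisoForm_zero_right]
  · rw [← h.anisoForm_eq_one hx]
    exact ((strictAntiOn_anisoForm ha hx).le_iff_ge ht (h.pos hx)).symm

theorem lt_iff_anisoForm_lt_one (h : IsAnorm n a anorm) (ha : ∀ i, 0 < a i) {t : ℝ} (ht : 0 < t)
    (x : RV n) : anorm x < t ↔ anisoForm a t x < 1 := by
  rcases eq_or_ne x 0 with rfl | hx
  · simp [h.1, ht, anisoForm_zero_right]
  · rw [← h.anisoForm_eq_one hx]
    exact ((strictAntiOn_anisoForm ha hx).lt_iff_gt ht (h.pos hx)).symm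

theorem isOpen_lt (h : IsAnorm n a anorm) (ha : ∀ i, 0 < a i) (t : ℝ) :
    IsOpen {x | anorm x < t} := by
  rcases le_or_gt t 0 with ht | ht
  · convert isOpen_empty
    exact eq_empty_of_forall_notMem fun x => (ht.trans (h.nonneg x)).not_gt
  · simp only [h.lt_iff_anisoForm_lt_one ha ht]
    exact _root_.isOpen_lt (continuous_anisoForm a t) continuous_const

theorem isCompact_le (h : IsAnorm n a anorm) (ha : ∀ i, 0 < a i) (t : ℝ) :
    IsCompact {x | anorm x ≤ t} := by
  rcases le_or_gt t 0 with ht | ht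
  · refine Set.Finite.isCompact ((finite_singleton 0).subset fun x hx => ?_)
    by_contra hx0
    exact (h.pos hx0).not_ge (hx.out.trans ht)
  · simp only [h.le_iff_anisoForm_le_one ha ht]
    exact isCompact_anisoForm_le_one a ht

theorem continuous (h : IsAnorm n a anorm) (ha : ∀ i, 0 < a i) : Continuous anorm := by
  refine OrderTopology.continuous_iff.2 fun t => ⟨?_, h.isOpen_lt ha t⟩
  rw [← isClosed_compl_iff, ← preimage_compl, compl_Ioi]
  exact (h.isCompact_le ha t).isClosed

theorem apply_anisoDilation (h : IsAnorm n a anorm) (ha : ∀ i, 0 < a i) {t : ℝ} (ht : 0 < t)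
    (x : RV n) : anorm (anisoDilation a ht x) = t * anorm x := by
  rcases eq_or_ne x 0 with rfl | hx
  · simp [h.1]
  · have hy : anisoDilation a ht x ≠ 0 := (anisoDilation a ht).map_ne_zero_iff.2 hx
    refine (strictAntiOn_anisoForm ha hy).injOn (h.pos hy) (mul_pos ht (h.pos hx)) ?_
    simp only [h.anisoForm_eq_one hy, anisoForm_mul_anisoDilation a ht (h.pos hx),
      h.anisoForm_eq_one hx]

end IsAnorm

section Telescoping

theorem finite_support_sub_of_eventually_eq {G : Type*} [AddGroup G] {u : ℕ → G} {c : G}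
    (hu : ∀ᶠ j in atTop, u j = c) : (Function.support fun j => u (j + 1) - u j).Finite := by
  obtain ⟨N, hN⟩ := eventually_atTop.1 hu
  refine (finite_lt_nat N).subset fun j hj => show j < N from
    lt_of_not_ge fun hNj => hj ?_
  simp only [hN j hNj, hN (j + 1) (Nat.le_succ_of_le hNj), sub_self]

theorem hasSum_sub_of_eventually_eq {G : Type*} [AddCommGroup G] [TopologicalSpace G]
    {u : ℕ → G} {c : G} (hu : ∀ᶠ j in atTop, u j = c) :
    HasSum (fun j => u (j + 1) - u j) (c - u 0) := by
  obtain ⟨N, hN⟩ := eventually_atTop.1 hu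
  rw [← hN N le_rfl, ← Finset.sum_range_sub]
  refine hasSum_sum_of_ne_finset_zero fun j hj => ?_
  have hNj : N ≤ j := by simpa using hj
  rw [hN j hNj, hN (j + 1) (Nat.le_succ_of_le hNj), sub_self]

end Telescoping

section AnnularDecomposition

theorem tsupport_subset_of_eq_zero_of_ge {X M : Type*} [TopologicalSpace X] [Zero M] {N : X → ℝ}
    {R : ℝ} {φ : X → M} (hN : Continuous N) (hφ : ∀ x, R ≤ N x → φ x = 0) :
    tsupport φ ⊆ {x | N x ≤ R} :=
  closure_minimal (fun x hx => le_of_not_ge fun hRx => hx (hφ x hRx))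
    (isClosed_le hN continuous_const)

variable {E : Type*} [NormedAddCommGroup E] [NormedSpace ℝ E]

theorem exists_contDiff_one_of_le_zero_of_ge [FiniteDimensional ℝ E] {N : E → ℝ}
    (hN : Continuous N) {r R : ℝ} (hrR : r < R) :
    ∃ φ : E → ℝ, ContDiff ℝ ∞ φ ∧ (∀ x, N x ≤ r → φ x = 1) ∧ ∀ x, R ≤ N x → φ x = 0 := by
  obtain ⟨φ, hφ₀, hφ₁, -⟩ := exists_contMDiffMap_zero_one_of_isClosed (n := ⊤) 𝓘(ℝ, E)
    (isClosed_le continuous_const hN) (isClosed_le hN continuous_const)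
    (disjoint_left.2 fun x (hR : R ≤ N x) (hr : N x ≤ r) => (hr.trans_lt hrR).not_ge hR)
  exact ⟨φ, φ.contMDiff.contDiff, fun x hx => hφ₁ hx, fun x hx => hφ₀ hx⟩

theorem exists_contDiff_mul_eq_smul_one {𝕜 : Type*} [NormedField 𝕜] [NormedAlgebra ℝ 𝕜] {k : ℕ∞}
    {φ : E → ℝ} {m : E → 𝕜} (hφ : ContDiff ℝ k φ) (hm : ContDiff ℝ k m)
    (hne : ∀ x ∈ tsupport φ, m x ≠ 0) :
    ∃ κ : E → 𝕜, ContDiff ℝ k κ ∧ tsupport κ ⊆ tsupport φ ∧ ∀ x, κ x * m x = φ x • 1 := by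
  have tsupport_le : tsupport (fun x => φ x • (m x)⁻¹) ⊆ tsupport φ :=
    tsupport_smul_subset_left φ _
  refine ⟨fun x => φ x • (m x)⁻¹, ?_, tsupport_le, fun x => ?_⟩
  · refine (contMDiff_of_tsupport fun x hx => ContDiffAt.contMDiffAt ?_).contDiff
    exact hφ.contDiffAt.smul (hm.contDiffAt.inv (hne x (tsupport_le hx)))
  · by_cases hx : x ∈ tsupport φ
    · rw [smul_mul_assoc, inv_mul_cancel₀ (hne x hx)]
    · simp only [image_eq_zero_of_notMem_tsupport hx, zero_smul, zero_mul]

/-- The difference `φ - φ ∘ A⁻¹` of a cutoff and its contraction by `A`. It is supported in an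
annulus, and its composites with the powers of `A` telescope. -/
def annularPiece (A : E ≃L[ℝ] E) (φ : E → ℝ) (x : E) : ℝ := φ x - φ (A.symm x)

variable {A : E ≃L[ℝ] E} {N φ : E → ℝ} {c r R : ℝ}

theorem contDiff_annularPiece {k : WithTop ℕ∞} (hφ : ContDiff ℝ k φ) :
    ContDiff ℝ k (annularPiece A φ) :=
  hφ.sub (hφ.comp A.symm.contDiff)

theorem tsupport_annularPiece_subset (hN : Continuous N) (hA : ∀ x, N (A x) = c * N x)
    (hc₀ : 0 < c) (hc₁ : c ≤ 1) (hr : 0 ≤ r) (hR : 0 ≤ R) (hφ₁ : ∀ x, N x ≤ r → φ x = 1)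
    (hφ₀ : ∀ x, R ≤ N x → φ x = 0) :
    tsupport (annularPiece A φ) ⊆ {x | c * r ≤ N x ∧ N x ≤ R} := by
  have N_eq (x : E) : N x = c * N (A.symm x) := by rw [← hA, A.apply_symm_apply]
  refine closure_minimal (fun x hx => ⟨?_, ?_⟩)
    ((isClosed_le continuous_const hN).inter (isClosed_le hN continuous_const))
  · by_contra! hlt
    have h₁ : N x ≤ r := hlt.le.trans (mul_le_of_le_one_left hr hc₁)
    have h₂ : N (A.symm x) ≤ r := le_of_mul_le_mul_left ((N_eq x).ge.trans hlt.le) hc₀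
    exact hx (sub_eq_zero.2 ((hφ₁ _ h₁).trans (hφ₁ _ h₂).symm))
  · by_contra! hlt
    have h₂ : R ≤ N (A.symm x) :=
      le_of_mul_le_mul_left ((mul_le_of_le_one_left hR hc₁).trans (hlt.le.trans (N_eq x).le)) hc₀
    exact hx (sub_eq_zero.2 ((hφ₀ _ hlt.le).trans (hφ₀ _ h₂).symm))

theorem annularPiece_iterate_succ (A : E ≃L[ℝ] E) (φ : E → ℝ) (j : ℕ) (x : E) :
    annularPiece A φ (A^[j + 1] x) = φ (A^[j + 1] x) - φ (A^[j] x) := by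
  rw [annularPiece, Function.iterate_succ_apply', A.symm_apply_apply]

theorem eventually_iterate_eq_one (hA : ∀ x, N (A x) = c * N x) (hc₀ : 0 ≤ c) (hc₁ : c < 1)
    (hr : 0 < r) (hφ₁ : ∀ x, N x ≤ r → φ x = 1) (x : E) : ∀ᶠ j in atTop, φ (A^[j] x) = 1 := by
  have N_iterate (j : ℕ) : N (A^[j] x) = c ^ j * N x := by
    induction j with
    | zero => simp
    | succ j ih => rw [Function.iterate_succ_apply', hA, ih, pow_succ', mul_assoc]
  have tendsto_zero : Tendsto (fun j => N (A^[j] x)) atTop (𝓝 0) := by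
    simpa only [N_iterate, zero_mul] using
      (tendsto_pow_atTop_nhds_zero_of_lt_one hc₀ hc₁).mul_const (N x)
  exact (tendsto_zero.eventually_le_const hr).mono fun j hj => hφ₁ _ hj

theorem exists_calderon_multipliers [FiniteDimensional ℝ E] {𝕜 : Type*} [NormedField 𝕜]
    [NormedAlgebra ℝ 𝕜] (hN : Continuous N) (hA : ∀ x, N (A x) = c * N x) (hc₀ : 0 < c)
    (hc₁ : c < 1) {α β : ℝ} (hα : 0 ≤ α) (hαβ : α < c * β) {m₀ m : E → 𝕜}
    (hm₀ : ContDiff ℝ ∞ m₀) (hm : ContDiff ℝ ∞ m) (hne₀ : ∀ x, N x < β → m₀ x ≠ 0)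
    (hne : ∀ x, α < N x → N x < β → m x ≠ 0) :
    ∃ κ₀ κ : E → 𝕜, ContDiff ℝ ∞ κ₀ ∧ ContDiff ℝ ∞ κ ∧ tsupport κ₀ ⊆ {x | N x < β} ∧
      tsupport κ ⊆ {x | α < N x ∧ N x < β} ∧
      ∀ x, {j : ℕ | κ (A^[j + 1] x) * m (A^[j + 1] x) ≠ 0}.Finite ∧
        HasSum (fun j => κ (A^[j + 1] x) * m (A^[j + 1] x)) (1 - κ₀ x * m₀ x) := by
  obtain ⟨r, hαr, hrβ⟩ := exists_between ((div_lt_iff₀' hc₀).2 hαβ)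
  obtain ⟨R, hrR, hRβ⟩ := exists_between hrβ
  have hr : 0 < r := (div_nonneg hα hc₀.le).trans_lt hαr
  obtain ⟨φ, hφ, hφ₁, hφ₀⟩ := exists_contDiff_one_of_le_zero_of_ge hN hrR
  have supp_φ : tsupport φ ⊆ {x | N x < β} := fun x hx =>
    (tsupport_subset_of_eq_zero_of_ge hN hφ₀ hx).out.trans_lt hRβ
  have supp_piece : tsupport (annularPiece A φ) ⊆ {x | α < N x ∧ N x < β} := fun x hx =>
    have ⟨hrx, hxR⟩ :=
      tsupport_annularPiece_subset hN hA hc₀ hc₁.le hr.le (hr.trans hrR).le hφ₁ hφ₀ hx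
    ⟨((div_lt_iff₀' hc₀).1 hαr).trans_le hrx, hxR.trans_lt hRβ⟩
  obtain ⟨κ₀, hκ₀, supp_κ₀, κ₀_mul⟩ :=
    exists_contDiff_mul_eq_smul_one hφ hm₀ fun x hx => hne₀ x (supp_φ hx)
  obtain ⟨κ, hκ, supp_κ, κ_mul⟩ := exists_contDiff_mul_eq_smul_one (contDiff_annularPiece hφ) hm
    fun x hx => hne x (supp_piece hx).1 (supp_piece hx).2
  refine ⟨κ₀, κ, hκ₀, hκ, supp_κ₀.trans supp_φ, supp_κ.trans supp_piece, fun x => ?_⟩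
  have stationary : ∀ᶠ j in atTop, φ (A^[j] x) • (1 : 𝕜) = 1 :=
    (eventually_iterate_eq_one hA hc₀.le hc₁ hr hφ₁ x).mono fun j hj => by rw [hj, one_smul]
  simp only [κ_mul, κ₀_mul, annularPiece_iterate_succ, sub_smul]
  exact ⟨finite_support_sub_of_eventually_eq stationary, hasSum_sub_of_eventually_eq stationary⟩

end AnnularDecomposition

theorem stmt8_general (n : ℕ) (a : Fin n → ℝ) (ha : ∀ i, 0 < a i)
    (anorm : RV n → ℝ) (h : IsAnorm n a anorm) (ψ0 ψ : RV n → ℂ)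
    (hψ0 : ContDiff ℝ ∞ (FT n ψ0)) (hψ : ContDiff ℝ ∞ (FT n ψ)) (ε : ℝ) (hε : 0 < ε)
    (hT : Tauber n anorm ψ0 ψ ε) :
    ∃ lam0 lam : SchwartzMap (RV n) ℂ,
      tsupport (FT n lam0) ⊆ {ξ : RV n | anorm ξ < 2 * ε} ∧
      tsupport (FT n lam) ⊆ {ξ : RV n | ε / 2 < anorm ξ ∧ anorm ξ < 2 * ε} ∧
      ∀ ξ : RV n,
        {j : ℕ |
          FT n lam (fun i => (2:ℝ) ^ (-((j:ℝ) + 1) * a i) * ξ i) *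
            FT n ψ (fun i => (2:ℝ) ^ (-((j:ℝ) + 1) * a i) * ξ i) ≠ 0}.Finite ∧
        FT n lam0 ξ * FT n ψ0 ξ +
          ∑' j : ℕ,
            FT n lam (fun i => (2:ℝ) ^ (-((j:ℝ) + 1) * a i) * ξ i) *
              FT n ψ (fun i => (2:ℝ) ^ (-((j:ℝ) + 1) * a i) * ξ i) = 1 := by
  obtain ⟨κ₀, κ, hκ₀, hκ, supp₀, supp, reproducing⟩ := exists_calderon_multipliers
    (h.continuous ha) (h.apply_anisoDilation ha (inv_pos.2 two_pos)) (inv_pos.2 two_pos)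
    (by norm_num) (half_pos hε).le (β := 2 * ε) (by linarith) hψ0 hψ
    (fun ξ hξ => norm_pos_iff.1 (hT.1 ξ hξ)) fun ξ hξ hξ' => norm_pos_iff.1 (hT.2 ξ hξ hξ')
  have compact {f : RV n → ℂ} (hf : tsupport f ⊆ {ξ | anorm ξ < 2 * ε}) : HasCompactSupport f :=
    (h.isCompact_le ha (2 * ε)).of_isClosed_subset (isClosed_tsupport f)
      (hf.trans fun _ hξ => hξ.out.le)
  obtain ⟨lam0, FT_lam0⟩ := exists_FT_eq ((compact supp₀).toSchwartzMap hκ₀)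
  obtain ⟨lam, FT_lam⟩ := exists_FT_eq ((compact (supp.trans fun _ => And.right)).toSchwartzMap hκ)
  replace FT_lam0 : FT n lam0 = κ₀ := FT_lam0
  replace FT_lam : FT n lam = κ := FT_lam
  refine ⟨lam0, lam, FT_lam0 ▸ supp₀, FT_lam ▸ supp, fun ξ => ?_⟩
  obtain ⟨finite, hasSum⟩ := reproducing ξ
  simp only [iterate_anisoDilation_inv a two_pos, Nat.cast_add_one] at finite hasSum
  rw [FT_lam0, FT_lam, hasSum.tsum_eq]
  exact ⟨finite, add_sub_cancel _ _⟩

/-- Calderón's reproducing formula on the Fourier side (Lemma 3.3). -/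
theorem stmt8 (n : ℕ) (hn : 1 ≤ n) (a : Fin n → ℝ) (ha : ∀ i, 1 ≤ a i)
    (anorm : RV n → ℝ) (h : IsAnorm n a anorm)
    (ψ0 ψ : SchwartzMap (RV n) ℂ) (ε : ℝ) (hε : 0 < ε)
    (hT : Tauber n anorm (⇑ψ0) (⇑ψ) ε) :
    ∃ lam0 lam : SchwartzMap (RV n) ℂ,
      tsupport (FT n ⇑lam0) ⊆ {ξ : RV n | anorm ξ < 2 * ε} ∧
      tsupport (FT n ⇑lam) ⊆ {ξ : RV n | ε / 2 < anorm ξ ∧ anorm ξ < 2 * ε} ∧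
      ∀ ξ : RV n,
        {j : ℕ |
          FT n (⇑lam) (fun i => (2:ℝ) ^ (-((j:ℝ) + 1) * a i) * ξ i) *
            FT n (⇑ψ) (fun i => (2:ℝ) ^ (-((j:ℝ) + 1) * a i) * ξ i) ≠ 0}.Finite ∧
        FT n (⇑lam0) ξ * FT n (⇑ψ0) ξ +
          ∑' j : ℕ,
            FT n (⇑lam) (fun i => (2:ℝ) ^ (-((j:ℝ) + 1) * a i) * ξ i) *
              FT n (⇑ψ) (fun i => (2:ℝ) ^ (-((j:ℝ) + 1) * a i) * ξ i) = 1 := by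
  exact stmt8_general n a (fun i => one_pos.trans_le (ha i)) anorm h ψ0 ψ
    (contDiff_FT ψ0) (contDiff_FT ψ) ε hε hT
end
end

section
/- Let M ≥ −1 be an integer and let α, β ∈ ℕ₀ⁿ be multi-indices. Then there is a constant C (depending only on α, β, M, a and n) such that for all 0 < t ≤ 1, all ν ∈ 𝒮(ℝⁿ) and all μ ∈ 𝒮_M: p_{α,β}( t^{−|a|}·μ(t^{−a}·) * ν ) ≤ C · t^{(M+1)a_0} · max{ p_{0,ζ}(𝓕μ) : ζ with |ζ| ≤ M+1 or ζ ≤ α } · max{ q_{M+1,γ}(𝓕(D^β ν)) : γ ≤ α }. -/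
open MeasureTheory Complex
open scoped ENNReal NNReal BigOperators

noncomputable section

open scoped SchwartzMap

/-!
By Fourier inversion, `p_{α,β}(μ_t * ν)` is at most a constant times the `L¹` norm of `D^α` of
`𝓕μ(t^a ·) 𝓕(D^β ν)`. Leibniz' rule reduces this to the products
`D^δ (𝓕μ(t^a ·)) · D^γ 𝓕(D^β ν)` with `δ + γ = α`. In the first factor the chain rule produces a
factor at most `t^{a₀|δ|}`, and Taylor expansion of `D^δ 𝓕μ` at the origin, where the moment
condition kills all terms of order at most `M - |δ|`, produces `(t^{a₀} |ξ|)^{M + 1 - |δ|}`.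
Together they give `t^{(M+1)a₀}`; the power of `|ξ|` goes into the weight of `q_{M+1,γ}`.
-/

lemma sum_add_single {ι : Type*} [Fintype ι] [DecidableEq ι] (α : ι → ℕ) (i : ι) :
    ∑ j, (α + Pi.single i 1 : ι → ℕ) j = ∑ j, α j + 1 := by
  simp [Finset.sum_add_distrib]

lemma prod_pow_add_single {ι R : Type*} [Fintype ι] [DecidableEq ι] [CommMonoid R] (x : ι → R)
    (α : ι → ℕ) (i : ι) :
    ∏ j, x j ^ (α + Pi.single i 1 : ι → ℕ) j = (∏ j, x j ^ α j) * x i := by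
  simp only [Pi.add_apply, pow_add, Finset.prod_mul_distrib]
  simp [Pi.single_apply, pow_ite]

lemma multiIndex_induction {ι : Type*} [Finite ι] [DecidableEq ι] {p : (ι → ℕ) → Prop}
    (zero : p 0) (add_single : ∀ α i, p α → p (α + Pi.single i 1)) (α : ι → ℕ) : p α := by
  suffices h : ∀ β, p β → p (β + α) by simpa using h 0 zero
  induction α using Pi.single_induction with
  | zero => simp
  | add α γ hα hγ => exact fun β hβ => add_assoc β α γ ▸ hγ _ (hα β hβ)
  | single i k =>
    intro β hβ
    induction k with
    | zero => simpa using hβ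
    | succ k ih => simpa [Pi.single_add, add_assoc] using add_single _ i ih

section Calculus

variable {ι : Type*} [Fintype ι]

section PartialDerivatives

variable [DecidableEq ι]

/-- The operator `D_i = -i ∂_i` on the Schwartz space of `ℝ^ι`. -/
def schwartzPD (i : ι) : Module.End ℂ 𝓢(ι → ℝ, ℂ) :=
  (-I) • (LineDeriv.lineDerivOpCLM ℂ 𝓢(ι → ℝ, ℂ) (Pi.single i 1 : ι → ℝ)).toLinearMap

lemma schwartzPD_apply (i : ι) (f : 𝓢(ι → ℝ, ℂ)) (x : ι → ℝ) :
    schwartzPD i f x = -I * fderiv ℝ f x (Pi.single i 1) := rfl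

lemma fderiv_apply_single (i : ι) (f : 𝓢(ι → ℝ, ℂ)) (x : ι → ℝ) :
    fderiv ℝ f x (Pi.single i 1) = I * schwartzPD i f x := by
  rw [schwartzPD_apply, ← mul_assoc, mul_neg, I_mul_I, neg_neg, one_mul]

lemma schwartzPD_schwartzPD_apply (i j : ι) (f : 𝓢(ι → ℝ, ℂ)) (x : ι → ℝ) :
    schwartzPD i (schwartzPD j f) x =
      -fderiv ℝ (fderiv ℝ f) x (Pi.single i 1) (Pi.single j 1) := by
  have hf : DifferentiableAt ℝ (fderiv ℝ f) x :=
    ((f.smooth 2).fderiv_right (m := 1) (by norm_num)).differentiable one_ne_zero x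
  have hfj : ⇑(schwartzPD j f) = fun y => -I * fderiv ℝ f y (Pi.single j 1) := rfl
  rw [schwartzPD_apply, hfj,
    fderiv_const_mul (hf.clm_apply (differentiableAt_const (Pi.single j (1 : ℝ)))),
    fderiv_clm_apply hf (differentiableAt_const (Pi.single j (1 : ℝ)))]
  simp [← mul_assoc]

lemma schwartzPD_commute (i j : ι) : Commute (schwartzPD i) (schwartzPD j) := by
  ext f x
  have hsymm : IsSymmSndFDerivAt ℝ f x := (f.smooth 2).contDiffAt.isSymmSndFDerivAt (by simp)
  simp only [Module.End.mul_apply, schwartzPD_schwartzPD_apply, hsymm.eq (Pi.single i 1)]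

/-- The operator `D^α = ∏ i, D_i ^ α i` on the Schwartz space of `ℝ^ι`. -/
def schwartzD (α : ι → ℕ) : Module.End ℂ 𝓢(ι → ℝ, ℂ) :=
  Finset.univ.noncommProd (fun i => schwartzPD i ^ α i)
    fun i _ j _ _ => (schwartzPD_commute i j).pow_pow _ _

@[simp]
lemma schwartzD_zero : schwartzD (0 : ι → ℕ) = 1 :=
  (Finset.noncommProd_eq_pow_card _ _ _ 1 fun _ _ => pow_zero _).trans (one_pow _)

lemma schwartzD_add (α β : ι → ℕ) : schwartzD (α + β) = schwartzD α * schwartzD β := by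
  simp only [schwartzD, Pi.add_apply, pow_add]
  exact Finset.noncommProd_mul_distrib _ _ _ _ fun i _ j _ _ =>
    (schwartzPD_commute i j).pow_pow _ _

@[simp]
lemma schwartzD_single (i : ι) : schwartzD (Pi.single i 1) = schwartzPD i := by
  refine (Finset.mul_noncommProd_erase _ (Finset.mem_univ i) _ _).symm.trans ?_
  have hrest := Finset.noncommProd_eq_pow_card (Finset.univ.erase i)
    (fun j => schwartzPD j ^ (Pi.single i 1 : ι → ℕ) j)
    (fun j _ k _ _ => (schwartzPD_commute j k).pow_pow _ _) 1
    fun j hj => by simp [Finset.ne_of_mem_erase hj]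
  exact (congrArg _ hrest).trans (by simp)

lemma schwartzD_add_single (α : ι → ℕ) (i : ι) (f : 𝓢(ι → ℝ, ℂ)) :
    schwartzD (α + Pi.single i 1) f = schwartzD α (schwartzPD i f) := by
  rw [schwartzD_add, schwartzD_single, Module.End.mul_apply]

end PartialDerivatives

section Leibniz

/-- The pointwise product of two Schwartz functions. -/
def schwartzMul (f g : 𝓢(ι → ℝ, ℂ)) : 𝓢(ι → ℝ, ℂ) :=
  SchwartzMap.pairing (ContinuousLinearMap.mul ℂ ℂ) f g

@[simp]
lemma schwartzMul_apply (f g : 𝓢(ι → ℝ, ℂ)) (x : ι → ℝ) : schwartzMul f g x = f x * g x := rfl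

variable [DecidableEq ι]

lemma schwartzPD_mul (i : ι) (f g : 𝓢(ι → ℝ, ℂ)) :
    schwartzPD i (schwartzMul f g) =
      schwartzMul (schwartzPD i f) g + schwartzMul f (schwartzPD i g) := by
  ext x
  have hcoe : ⇑(schwartzMul f g) = fun y => f y * g y := rfl
  simp only [schwartzPD_apply, hcoe, fderiv_fun_mul f.differentiableAt g.differentiableAt,
    _root_.add_apply, _root_.smul_apply, smul_eq_mul, schwartzMul_apply]
  ring

lemma schwartzD_mul_le {N : 𝓢(ι → ℝ, ℂ) → ℝ≥0∞} (hN : ∀ f g, N (f + g) ≤ N f + N g)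
    {α : ι → ℕ} {f g : 𝓢(ι → ℝ, ℂ)} {B : ℝ≥0∞}
    (hB : ∀ γ δ, γ + δ = α → N (schwartzMul (schwartzD γ f) (schwartzD δ g)) ≤ B) :
    N (schwartzD α (schwartzMul f g)) ≤ 2 ^ (∑ i, α i) * B := by
  induction α using multiIndex_induction generalizing f g with
  | zero => simpa using hB 0 0 (add_zero 0)
  | add_single α i ih =>
    have hf : N (schwartzD α (schwartzMul (schwartzPD i f) g)) ≤ 2 ^ (∑ j, α j) * B := by
      refine ih fun γ δ h => ?_
      rw [← schwartzD_add_single]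
      exact hB _ _ (by rw [add_right_comm, h])
    have hg : N (schwartzD α (schwartzMul f (schwartzPD i g))) ≤ 2 ^ (∑ j, α j) * B := by
      refine ih fun γ δ h => ?_
      rw [← schwartzD_add_single]
      exact hB _ _ (by rw [← add_assoc, h])
    rw [schwartzD_add_single, schwartzPD_mul, map_add, sum_add_single, pow_succ, mul_two, add_mul]
    exact (hN _ _).trans (add_le_add hf hg)

end Leibniz

section Taylor

variable [DecidableEq ι]

lemma norm_le_mul_sum_abs_of_fderiv_le {F : Type*} [NormedAddCommGroup F] [NormedSpace ℝ F]
    {f : (ι → ℝ) → F} (hf : Differentiable ℝ f) (hf0 : f 0 = 0) {x : ι → ℝ} {B : ℝ}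
    (hB : ∀ s ∈ Set.Ico (0 : ℝ) 1, ∀ i, ‖fderiv ℝ f (s • x) (Pi.single i 1)‖ ≤ B) :
    ‖f x‖ ≤ B * ∑ i, |x i| := by
  have hderiv (s : ℝ) : HasDerivAt (fun s : ℝ => f (s • x)) (fderiv ℝ f (s • x) x) s := by
    have hline : HasDerivAt (fun s : ℝ => s • x) x s := by
      simpa using (hasDerivAt_id s).smul_const x
    exact (hf _).hasFDerivAt.comp_hasDerivAt s hline
  have hbound : ∀ s ∈ Set.Ico (0 : ℝ) 1, ‖fderiv ℝ f (s • x) x‖ ≤ B * ∑ i, |x i| := by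
    intro s hs
    calc ‖fderiv ℝ f (s • x) x‖
        = ‖∑ i, x i • fderiv ℝ f (s • x) (Pi.single i 1)‖ := by
          conv_lhs => arg 1; arg 2; rw [pi_eq_sum_univ' x]
          simp only [map_sum, map_smul]
      _ ≤ ∑ i, ‖x i • fderiv ℝ f (s • x) (Pi.single i 1)‖ := norm_sum_le _ _
      _ ≤ ∑ i, |x i| * B := Finset.sum_le_sum fun i _ => by
          rw [norm_smul, Real.norm_eq_abs]
          exact mul_le_mul_of_nonneg_left (hB s hs i) (abs_nonneg _)
      _ = B * ∑ i, |x i| := by rw [← Finset.sum_mul, mul_comm]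
  simpa [hf0] using norm_image_sub_le_of_norm_deriv_le_segment_01'
    (fun s _ => (hderiv s).hasDerivWithinAt) hbound

lemma norm_le_mul_pow_of_schwartzD_eq_zero {P : ℝ} {m : ℕ} {f : 𝓢(ι → ℝ, ℂ)}
    (hzero : ∀ ζ, ∑ i, ζ i < m → schwartzD ζ f 0 = 0)
    (hbound : ∀ ζ, ∑ i, ζ i = m → ∀ x, ‖schwartzD ζ f x‖ ≤ P) (x : ι → ℝ) :
    ‖f x‖ ≤ P * (∑ i, |x i|) ^ m := by
  induction m generalizing f x with
  | zero => simpa using hbound 0 (by simp) x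
  | succ m ih =>
    have hderiv (i : ι) (y : ι → ℝ) : ‖schwartzPD i f y‖ ≤ P * (∑ i, |y i|) ^ m := by
      refine ih (fun ζ hζ => ?_) (fun ζ hζ => ?_) y <;> rw [← schwartzD_add_single]
      · exact hzero _ (by rw [sum_add_single]; lia)
      · exact hbound _ (by rw [sum_add_single, hζ])
    rw [pow_succ, ← mul_assoc]
    refine norm_le_mul_sum_abs_of_fderiv_le f.differentiable (by simpa using hzero 0) ?_
    intro s hs i
    have hP : 0 ≤ P := (norm_nonneg _).trans (hbound (Pi.single i (m + 1)) (by simp) 0)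
    rw [fderiv_apply_single, norm_mul, norm_I, one_mul]
    have hscale : ∑ j, |(s • x) j| ≤ ∑ j, |x j| := Finset.sum_le_sum fun j _ => by
      rw [Pi.smul_apply, smul_eq_mul, abs_mul, abs_of_nonneg hs.1]
      exact mul_le_of_le_one_left (abs_nonneg _) hs.2.le
    exact (hderiv i _).trans (by gcongr)

-- For `m < ∑ i, δ i` the exponent truncates to `0`: then no vanishing at the origin is used.
lemma norm_schwartzD_le_mul_pow {P : ℝ} {m : ℕ} {δ : ι → ℕ} {f : 𝓢(ι → ℝ, ℂ)}
    (hzero : ∀ ζ, ∑ i, ζ i < m → schwartzD ζ f 0 = 0)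
    (hbound : ∀ ζ, ∑ i, ζ i = m ∨ ζ = δ → ∀ x, ‖schwartzD ζ f x‖ ≤ P) (x : ι → ℝ) :
    ‖schwartzD δ f x‖ ≤ P * (∑ i, |x i|) ^ (m - ∑ i, δ i) := by
  rcases le_or_gt m (∑ i, δ i) with hδ | hδ
  · simpa [Nat.sub_eq_zero_of_le hδ] using hbound δ (Or.inr rfl) x
  · have hsum (ζ : ι → ℕ) : ∑ i, (ζ + δ) i = ∑ i, ζ i + ∑ i, δ i := Finset.sum_add_distrib
    refine norm_le_mul_pow_of_schwartzD_eq_zero (fun ζ hζ => ?_) (fun ζ hζ => ?_) x <;>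
      rw [← Module.End.mul_apply, ← schwartzD_add]
    · exact hzero _ (by rw [hsum]; lia)
    · exact hbound _ (Or.inl (by rw [hsum]; lia))

end Taylor

section Dilation

/-- The diagonal linear automorphism `x ↦ (c_i x_i)_i` of `ℝ^ι`; the anisotropic dilation `t^a` is
the case `c_i = t^{a_i}`. -/
def diagonalEquiv {ι : Type*} (c : ι → ℝˣ) : (ι → ℝ) ≃L[ℝ] (ι → ℝ) :=
  ContinuousLinearEquiv.piCongrRight fun i => ContinuousLinearEquiv.smulLeft (c i)

@[simp]
lemma diagonalEquiv_apply {ι : Type*} (c : ι → ℝˣ) (x : ι → ℝ) (i : ι) :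
    diagonalEquiv c x i = c i * x i := rfl

/-- The dilated Schwartz function `x ↦ f (c_i x_i)_i`. -/
def dilate (c : ι → ℝˣ) : 𝓢(ι → ℝ, ℂ) →L[ℂ] 𝓢(ι → ℝ, ℂ) :=
  SchwartzMap.compCLMOfContinuousLinearEquiv ℂ (diagonalEquiv c)

@[simp]
lemma dilate_apply (c : ι → ℝˣ) (f : 𝓢(ι → ℝ, ℂ)) (x : ι → ℝ) :
    dilate c f x = f (diagonalEquiv c x) := rfl

lemma sum_abs_le_card_mul_sqrt (x : ι → ℝ) :
    ∑ i, |x i| ≤ Fintype.card ι * √(1 + ∑ i, x i ^ 2) := by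
  have hle (i : ι) : |x i| ≤ √(1 + ∑ j, x j ^ 2) := by
    refine Real.abs_le_sqrt ?_
    have := Finset.single_le_sum (fun j _ => sq_nonneg (x j)) (Finset.mem_univ i)
    linarith
  simpa using Finset.sum_le_sum fun i (_ : i ∈ Finset.univ) => hle i

variable [DecidableEq ι]

lemma schwartzPD_dilate (c : ι → ℝˣ) (i : ι) (f : 𝓢(ι → ℝ, ℂ)) :
    schwartzPD i (dilate c f) = (c i : ℂ) • dilate c (schwartzPD i f) := by
  ext x
  have hcomp : ⇑(dilate c f) = f ∘ diagonalEquiv c := rfl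
  have hsingle : diagonalEquiv c (Pi.single i 1) = (c i : ℝ) • Pi.single i 1 := by
    ext j
    rcases eq_or_ne j i with rfl | hj <;> simp [*]
  rw [schwartzPD_apply, hcomp, (diagonalEquiv c).comp_right_fderiv, _root_.smul_apply, dilate_apply,
    schwartzPD_apply, ContinuousLinearMap.comp_apply, ContinuousLinearEquiv.coe_coe, hsingle,
    map_smul, Complex.real_smul, smul_eq_mul, mul_left_comm]

lemma schwartzD_dilate (c : ι → ℝˣ) (α : ι → ℕ) (f : 𝓢(ι → ℝ, ℂ)) :
    schwartzD α (dilate c f) = (∏ i, (c i : ℂ) ^ α i) • dilate c (schwartzD α f) := by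
  induction α using multiIndex_induction generalizing f with
  | zero => simp
  | add_single α i ih =>
    rw [schwartzD_add_single, schwartzPD_dilate, map_smul, ih, smul_smul, schwartzD_add_single,
      prod_pow_add_single, mul_comm]

lemma norm_schwartzD_dilate_le {P : ℝ} {m : ℕ} {δ : ι → ℕ} {f : 𝓢(ι → ℝ, ℂ)}
    (hzero : ∀ ζ, ∑ i, ζ i < m → schwartzD ζ f 0 = 0)
    (hbound : ∀ ζ, ∑ i, ζ i = m ∨ ζ = δ → ∀ x, ‖schwartzD ζ f x‖ ≤ P)
    {c : ι → ℝˣ} {τ : ℝ} (hτ0 : 0 ≤ τ) (hτ1 : τ ≤ 1) (hc : ∀ i, |(c i : ℝ)| ≤ τ) (x : ι → ℝ) :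
    ‖schwartzD δ (dilate c f) x‖ ≤
      ((Fintype.card ι + 1) * τ) ^ m * P * (1 + ∑ i, x i ^ 2) ^ ((m : ℝ) / 2) := by
  set w := √(1 + ∑ i, x i ^ 2)
  set k := m - ∑ i, δ i
  have hP : 0 ≤ P := (norm_nonneg _).trans (hbound δ (Or.inr rfl) 0)
  have hw : 1 ≤ w := Real.one_le_sqrt.2 (le_add_of_nonneg_right (by positivity))
  have hbase : 1 ≤ (Fintype.card ι + 1) * w := one_le_mul_of_one_le_of_one_le (by simp) hw
  have hprod : ‖∏ i, (c i : ℂ) ^ δ i‖ ≤ τ ^ ∑ i, δ i := by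
    rw [← Finset.prod_pow_eq_pow_sum, norm_prod]
    gcongr with i
    rw [norm_pow, norm_real]
    exact pow_le_pow_left₀ (abs_nonneg _) (hc i) _
  have hsum : ∑ i, |diagonalEquiv c x i| ≤ τ * ((Fintype.card ι + 1) * w) :=
    calc ∑ i, |diagonalEquiv c x i| ≤ ∑ i, τ * |x i| := by
          gcongr with i
          rw [diagonalEquiv_apply, abs_mul]
          exact mul_le_mul_of_nonneg_right (hc i) (abs_nonneg _)
      _ = τ * ∑ i, |x i| := Finset.mul_sum .. |>.symm
      _ ≤ τ * ((Fintype.card ι + 1) * w) := by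
          have := sum_abs_le_card_mul_sqrt x
          gcongr
          linarith
  calc ‖schwartzD δ (dilate c f) x‖
      ≤ τ ^ (∑ i, δ i) * (P * (τ * ((Fintype.card ι + 1) * w)) ^ k) := by
        rw [schwartzD_dilate, _root_.smul_apply, norm_smul, dilate_apply]
        refine mul_le_mul hprod ?_ (norm_nonneg _) (by positivity)
        exact (norm_schwartzD_le_mul_pow hzero hbound _).trans (by gcongr)
    _ = τ ^ (∑ i, δ i + k) * P * ((Fintype.card ι + 1) * w) ^ k := by
      rw [pow_add, mul_pow]; ring
    _ ≤ τ ^ m * P * ((Fintype.card ι + 1) * w) ^ m := by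
      gcongr ?_ * _ * ?_
      · exact pow_le_pow_of_le_one hτ0 hτ1 (by lia)
      · exact pow_le_pow_right₀ hbase (by lia)
    _ = ((Fintype.card ι + 1) * τ) ^ m * P * (1 + ∑ i, x i ^ 2) ^ ((m : ℝ) / 2) := by
      rw [Real.rpow_div_two_eq_sqrt _ (by positivity), Real.rpow_natCast, mul_pow, mul_pow]
      ring

end Dilation

end Calculus

lemma coe_schwartzPD_pow {n : ℕ} (i : Fin n) (k : ℕ) (f : 𝓢(RV n, ℂ)) :
    ⇑((schwartzPD i ^ k) f) = (-I) ^ k • pderivIter n i k f := by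
  induction k with
  | zero => simp [pderivIter]
  | succ k ih =>
    ext x
    rw [pow_succ', Module.End.mul_apply, schwartzPD_apply, ih, fderiv_const_smul_field, pow_succ',
      mul_smul]
    rfl

lemma pderivIter_smul {n : ℕ} (i : Fin n) (k : ℕ) (c : ℂ) (g : RV n → ℂ) :
    pderivIter n i k (c • g) = c • pderivIter n i k g := by
  induction k with
  | zero => rfl
  | succ k ih =>
    ext x
    rw [pderivIter, ih, pderiv1, fderiv_const_smul_field]
    rfl

lemma coe_schwartzD {n : ℕ} (α : Fin n → ℕ) (f : 𝓢(RV n, ℂ)) :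
    ⇑(schwartzD α f) = Dop n α f := by
  have hlist (l : List (Fin n)) :
      ⇑((l.map fun i => schwartzPD i ^ α i).prod f) =
        (-I) ^ (l.map α).sum • l.foldr (fun i h => pderivIter n i (α i) h) f := by
    induction l with
    | nil => simp
    | cons i l ih =>
      simp only [List.map_cons, List.prod_cons, Module.End.mul_apply, coe_schwartzPD_pow, ih,
        pderivIter_smul, List.sum_cons, pow_add, mul_smul, List.foldr_cons]
  have hprod : schwartzD α = ((List.finRange n).map fun i => schwartzPD i ^ α i).prod := by
    rw [← Finset.noncommProd_toFinset _ _ _ (List.nodup_finRange n)]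
    exact Finset.noncommProd_congr (List.toFinset_finRange n).symm (fun _ _ => rfl) _
  rw [hprod, hlist, ← List.ofFn_eq_map, List.sum_ofFn]
  rfl

lemma smul_map_diagonalEquiv_volume {ι : Type*} [Fintype ι] (c : ι → ℝˣ) :
    ENNReal.ofReal |∏ i, (c i : ℝ)| • Measure.map (diagonalEquiv c) volume = volume := by
  classical
  have hdet : (Matrix.diagonal fun i => (c i : ℝ)).det = ∏ i, (c i : ℝ) := Matrix.det_diagonal
  have hcoe : ⇑(diagonalEquiv c) = Matrix.toLin' (Matrix.diagonal fun i => (c i : ℝ)) := by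
    ext x i
    simp [Matrix.mulVec_diagonal]
  rw [hcoe, ← hdet]
  exact Real.smul_map_diagonal_volume_pi (by simp [hdet, Finset.prod_ne_zero_iff])

lemma integral_comp_diagonalEquiv {ι : Type*} [Fintype ι] (c : ι → ℝˣ) (f : (ι → ℝ) → ℂ) :
    ∫ x, f x = |∏ i, (c i : ℝ)| * ∫ x, f (diagonalEquiv c x) := by
  conv_lhs => rw [← smul_map_diagonalEquiv_volume c]
  rw [integral_smul_measure, ENNReal.toReal_ofReal (abs_nonneg _), real_smul]
  exact congrArg _ ((diagonalEquiv c).toHomeomorph.measurableEmbedding.integral_map f)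

section Fourier

open scoped FourierTransform

variable {n : ℕ}

/-- The Schwartz function on Euclidean space with the same values as `f`, to which Mathlib's Fourier
transform applies: that needs an inner product space. -/
def toEuclideanSchwartz : 𝓢(RV n, ℂ) →L[ℂ] 𝓢(EuclideanSpace ℝ (Fin n), ℂ) :=
  SchwartzMap.compCLMOfContinuousLinearEquiv ℂ (EuclideanSpace.equiv (Fin n) ℝ)

lemma toEuclideanSchwartz_apply (f : 𝓢(RV n, ℂ)) (v : EuclideanSpace ℝ (Fin n)) :
    toEuclideanSchwartz f v = f v.ofLp := rfl

/-- The map `ξ ↦ ξ / 2π`, from angular frequencies to the frequencies of Mathlib's Fourier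
transform. -/
def angularEquiv (n : ℕ) : RV n ≃L[ℝ] EuclideanSpace ℝ (Fin n) :=
  (diagonalEquiv fun _ => Units.mk0 (2 * Real.pi)⁻¹ (by positivity)).trans
    (EuclideanSpace.equiv (Fin n) ℝ).symm

lemma angularEquiv_apply (ξ : RV n) (i : Fin n) : angularEquiv n ξ i = (2 * Real.pi)⁻¹ * ξ i := rfl

lemma angularEquiv_single (i : Fin n) :
    angularEquiv n (Pi.single i 1) = (2 * Real.pi)⁻¹ • EuclideanSpace.single i (1 : ℝ) := by
  ext j
  simp [angularEquiv_apply, Pi.single_apply]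

/-- The Fourier transform `FT`, as an operator on the Schwartz space of `ℝⁿ`. -/
def schwartzFT : 𝓢(RV n, ℂ) →L[ℂ] 𝓢(RV n, ℂ) :=
  SchwartzMap.compCLMOfContinuousLinearEquiv ℂ (angularEquiv n) ∘L
    FourierTransform.fourierCLM ℂ _ ∘L toEuclideanSchwartz

lemma schwartzFT_apply (f : 𝓢(RV n, ℂ)) (ξ : RV n) :
    schwartzFT f ξ = 𝓕 (toEuclideanSchwartz f) (angularEquiv n ξ) := rfl

lemma coe_schwartzFT (f : 𝓢(RV n, ℂ)) : ⇑(schwartzFT f) = FT n f := by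
  ext ξ
  have hphase (v : EuclideanSpace ℝ (Fin n)) :
      -2 * Real.pi * inner ℝ v (angularEquiv n ξ) = -∑ i, v.ofLp i * ξ i := by
    simp only [PiLp.inner_apply, angularEquiv_apply, Finset.mul_sum, ← Finset.sum_neg_distrib]
    refine Finset.sum_congr rfl fun i _ => ?_
    rw [RCLike.inner_apply, conj_trivial]
    field_simp
  rw [schwartzFT_apply, SchwartzMap.fourier_coe, Real.fourier_eq', FT,
    ← (PiLp.volume_preserving_ofLp (Fin n)).integral_comp
      (MeasurableEquiv.toLp 2 (Fin n → ℝ)).symm.measurableEmbedding]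
  refine integral_congr_ae (.of_forall fun v => ?_)
  simp only [hphase, smul_eq_mul, toEuclideanSchwartz_apply]
  congr 2
  push_cast
  ring

lemma schwartzFT_schwartzPD_apply (i : Fin n) (f : 𝓢(RV n, ℂ)) (ξ : RV n) :
    schwartzFT (schwartzPD i f) ξ = ξ i * schwartzFT f ξ := by
  have hpull : toEuclideanSchwartz (schwartzPD i f) =
      (-I) • LineDeriv.lineDerivOp (EuclideanSpace.single i (1 : ℝ)) (toEuclideanSchwartz f) := by
    rw [toEuclideanSchwartz, SchwartzMap.lineDerivOp_compCLMOfContinuousLinearEquiv]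
    rfl
  have hinner : (fun v : EuclideanSpace ℝ (Fin n) =>
      inner ℝ v (EuclideanSpace.single i (1 : ℝ))).HasTemperateGrowth := by fun_prop
  rw [schwartzFT_apply, hpull, FourierTransform.fourier_smul, SchwartzMap.fourier_lineDerivOp_eq,
    _root_.smul_apply, _root_.smul_apply, SchwartzMap.smulLeftCLM_apply_apply hinner,
    EuclideanSpace.inner_single_right, angularEquiv_apply, schwartzFT_apply]
  have hπ : (Real.pi : ℂ) ≠ 0 := ofReal_ne_zero.2 Real.pi_ne_zero
  simp only [smul_eq_mul, real_smul, conj_trivial, one_mul]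
  push_cast
  field_simp
  simp [I_sq]

lemma schwartzFT_schwartzD_apply (β : Fin n → ℕ) (f : 𝓢(RV n, ℂ)) (ξ : RV n) :
    schwartzFT (schwartzD β f) ξ = (∏ i, (ξ i : ℂ) ^ β i) * schwartzFT f ξ := by
  induction β using multiIndex_induction generalizing f with
  | zero => simp
  | add_single β i ih =>
    rw [schwartzD_add_single, ih, schwartzFT_schwartzPD_apply, prod_pow_add_single, mul_assoc]

/-- Multiplication by the coordinate `x_i` on the Schwartz space of `ℝⁿ`. -/
def coordMul (i : Fin n) : 𝓢(RV n, ℂ) →L[ℝ] 𝓢(RV n, ℂ) :=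
  SchwartzMap.smulLeftCLM ℂ fun x : RV n => x i

lemma hasTemperateGrowth_coord (i : Fin n) : (fun x : RV n => x i).HasTemperateGrowth :=
  (ContinuousLinearMap.proj (R := ℝ) (φ := fun _ : Fin n => ℝ) i).hasTemperateGrowth

lemma coordMul_apply (i : Fin n) (f : 𝓢(RV n, ℂ)) (x : RV n) : coordMul i f x = x i * f x := by
  rw [coordMul, SchwartzMap.smulLeftCLM_apply_apply (hasTemperateGrowth_coord i), real_smul]

/-- Multiplication by the monomial `x^α` on the Schwartz space of `ℝⁿ`. -/
def monomialMul (α : Fin n → ℕ) : 𝓢(RV n, ℂ) →L[ℝ] 𝓢(RV n, ℂ) :=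
  SchwartzMap.smulLeftCLM ℂ fun x : RV n => ∏ i, x i ^ α i

lemma hasTemperateGrowth_monomial (α : Fin n → ℕ) :
    (fun x : RV n => ∏ i, x i ^ α i).HasTemperateGrowth := by
  induction α using multiIndex_induction with
  | zero => simp
  | add_single α i ih =>
    simp only [prod_pow_add_single]
    exact ih.mul (hasTemperateGrowth_coord i)

lemma monomialMul_apply (α : Fin n → ℕ) (f : 𝓢(RV n, ℂ)) (x : RV n) :
    monomialMul α f x = ((∏ i, x i ^ α i : ℝ) : ℂ) * f x := by
  rw [monomialMul, SchwartzMap.smulLeftCLM_apply_apply (hasTemperateGrowth_monomial α), real_smul]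

lemma schwartzPD_schwartzFT (i : Fin n) (f : 𝓢(RV n, ℂ)) :
    schwartzPD i (schwartzFT f) = -schwartzFT (coordMul i f) := by
  have hinner : (fun v : EuclideanSpace ℝ (Fin n) =>
      inner ℝ v (EuclideanSpace.single i (1 : ℝ))).HasTemperateGrowth := by fun_prop
  have hcoord : toEuclideanSchwartz (coordMul i f) =
      SchwartzMap.smulLeftCLM ℂ (fun v => inner ℝ v (EuclideanSpace.single i (1 : ℝ)))
        (toEuclideanSchwartz f) := by
    ext v
    rw [SchwartzMap.smulLeftCLM_apply_apply hinner, toEuclideanSchwartz_apply, coordMul_apply,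
      EuclideanSpace.inner_single_right, conj_trivial, one_mul, real_smul,
      toEuclideanSchwartz_apply]
  ext ξ
  have hcomp : ⇑(schwartzFT f) =
      (𝓕 (toEuclideanSchwartz f) : 𝓢(EuclideanSpace ℝ (Fin n), ℂ)) ∘ angularEquiv n := rfl
  rw [schwartzPD_apply, hcomp, (angularEquiv n).comp_right_fderiv,
    ContinuousLinearMap.comp_apply, ContinuousLinearEquiv.coe_coe, angularEquiv_single, map_smul,
    ← SchwartzMap.lineDerivOp_apply_eq_fderiv, SchwartzMap.lineDerivOp_fourier_eq, ← hcoord,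
    FourierTransform.fourier_smul, _root_.smul_apply, _root_.neg_apply, schwartzFT_apply]
  have hπ : (Real.pi : ℂ) ≠ 0 := ofReal_ne_zero.2 Real.pi_ne_zero
  simp only [smul_eq_mul, real_smul]
  push_cast
  field_simp
  simp [I_sq]

lemma schwartzD_schwartzFT (α : Fin n → ℕ) (f : 𝓢(RV n, ℂ)) :
    schwartzD α (schwartzFT f) = (-1 : ℂ) ^ (∑ i, α i) • schwartzFT (monomialMul α f) := by
  induction α using multiIndex_induction generalizing f with
  | zero =>
    have hone : monomialMul 0 f = f := by
      ext x
      simp [monomialMul_apply]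
    simp [hone]
  | add_single α i ih =>
    have hsplit : monomialMul (α + Pi.single i 1) f = monomialMul α (coordMul i f) := by
      ext x
      simp only [monomialMul_apply, coordMul_apply, prod_pow_add_single, ofReal_mul, mul_assoc]
    rw [schwartzD_add_single, schwartzPD_schwartzFT, map_neg, ih, hsplit, sum_add_single, pow_succ,
      mul_neg_one, neg_smul]

lemma smul_map_angularEquiv_volume :
    ENNReal.ofReal ((2 * Real.pi)⁻¹ ^ n) • Measure.map (angularEquiv n) volume = volume := by
  set c : Fin n → ℝˣ := fun _ => Units.mk0 (2 * Real.pi)⁻¹ (by positivity)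
  have hdet : |∏ i, (c i : ℝ)| = (2 * Real.pi)⁻¹ ^ n := by
    simp [c, abs_of_pos Real.pi_pos]
  have hmap : Measure.map (angularEquiv n) volume =
      Measure.map (WithLp.toLp 2) (Measure.map (diagonalEquiv c) volume) :=
    (Measure.map_map (PiLp.volume_preserving_toLp (Fin n)).measurable
      (diagonalEquiv c).continuous.measurable).symm
  rw [hmap, ← hdet, ← Measure.map_smul, smul_map_diagonalEquiv_volume,
    (PiLp.volume_preserving_toLp (Fin n)).map_eq]

lemma enorm_le_lintegral_schwartzFT (f : 𝓢(RV n, ℂ)) (x : RV n) :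
    ‖f x‖ₑ ≤ ENNReal.ofReal ((2 * Real.pi)⁻¹ ^ n) * ∫⁻ ξ, ‖schwartzFT f ξ‖ₑ := by
  have hinv : f x = 𝓕⁻ (𝓕 (toEuclideanSchwartz f)) (WithLp.toLp 2 x) := by
    rw [FourierTransform.fourierInv_fourier_eq, toEuclideanSchwartz_apply]
  have hsubst : ∫⁻ v, ‖𝓕 (toEuclideanSchwartz f) v‖ₑ =
      ENNReal.ofReal ((2 * Real.pi)⁻¹ ^ n) * ∫⁻ ξ, ‖schwartzFT f ξ‖ₑ := by
    conv_lhs => rw [← smul_map_angularEquiv_volume]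
    rw [lintegral_smul_measure, smul_eq_mul]
    exact congrArg _ ((angularEquiv n).toHomeomorph.measurableEmbedding.lintegral_map _)
  rw [hinv, SchwartzMap.fourierInv_coe, Real.fourierInv_eq, ← hsubst]
  refine (enorm_integral_le_lintegral_enorm _).trans_eq ?_
  simp only [← ofReal_norm, Circle.norm_smul]

lemma schwartzFT_dilate_inv (c : Fin n → ℝˣ) (f : 𝓢(RV n, ℂ)) :
    schwartzFT (dilate c⁻¹ f) = |∏ i, (c i : ℝ)| • dilate c (schwartzFT f) := by
  ext ξ
  rw [_root_.smul_apply, dilate_apply, coe_schwartzFT, coe_schwartzFT, FT,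
    integral_comp_diagonalEquiv c, real_smul, FT]
  have hinv (x : RV n) : dilate c⁻¹ f (diagonalEquiv c x) = f x := by
    rw [dilate_apply]
    congr 1
    ext i
    simp
  simp only [hinv, diagonalEquiv_apply, mul_assoc, mul_left_comm]

/-- The convolution `conv2`, as an operation on the Schwartz space of `ℝⁿ`, obtained from Mathlib's
convolution on Euclidean space. -/
def schwartzConv (f g : 𝓢(RV n, ℂ)) : 𝓢(RV n, ℂ) :=
  SchwartzMap.compCLMOfContinuousLinearEquiv ℂ (EuclideanSpace.equiv (Fin n) ℝ).symm
    (SchwartzMap.convolution (ContinuousLinearMap.mul ℂ ℂ) (toEuclideanSchwartz f)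
      (toEuclideanSchwartz g))

lemma coe_schwartzConv (f g : 𝓢(RV n, ℂ)) : ⇑(schwartzConv f g) = conv2 n f g := by
  ext x
  refine (SchwartzMap.convolution_apply (ContinuousLinearMap.mul ℂ ℂ) (toEuclideanSchwartz f)
    (toEuclideanSchwartz g) (WithLp.toLp 2 x)).trans ?_
  rw [convolution_def, conv2, ← (PiLp.volume_preserving_ofLp (Fin n)).integral_comp
    (MeasurableEquiv.toLp 2 (Fin n → ℝ)).symm.measurableEmbedding]
  rfl

lemma schwartzFT_schwartzConv (f g : 𝓢(RV n, ℂ)) :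
    schwartzFT (schwartzConv f g) = schwartzMul (schwartzFT f) (schwartzFT g) := by
  ext ξ
  have hpull : toEuclideanSchwartz (schwartzConv f g) =
      SchwartzMap.convolution (ContinuousLinearMap.mul ℂ ℂ) (toEuclideanSchwartz f)
        (toEuclideanSchwartz g) := rfl
  rw [schwartzFT_apply, hpull, SchwartzMap.fourier_convolution]
  rfl

lemma schwartzFT_schwartzD_schwartzConv (β : Fin n → ℕ) (f g : 𝓢(RV n, ℂ)) :
    schwartzFT (schwartzD β (schwartzConv f g)) =
      schwartzMul (schwartzFT f) (schwartzFT (schwartzD β g)) := by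
  ext ξ
  rw [schwartzFT_schwartzD_apply, schwartzFT_schwartzConv, schwartzMul_apply, schwartzMul_apply,
    schwartzFT_schwartzD_apply, mul_left_comm]

end Fourier

section Seminorms

variable {n : ℕ}

lemma enorm_schwartzD_le_pSemiE (ζ : Fin n → ℕ) (f : 𝓢(RV n, ℂ)) (x : RV n) :
    ‖schwartzD ζ f x‖ₑ ≤ pSemiE n 0 ζ f := by
  refine le_iSup_of_le x ?_
  simp [coe_schwartzD, enorm]

lemma qSemiE_coe (N : ℝ) (γ : Fin n → ℕ) (f : 𝓢(RV n, ℂ)) :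
    qSemiE n N γ f =
      ∫⁻ x, ENNReal.ofReal ((1 + ∑ i, x i ^ 2) ^ (N / 2)) * ‖schwartzD γ f x‖ₑ := by
  rw [coe_schwartzD]
  rfl

lemma pSemiE_le_lintegral_schwartzFT (α β : Fin n → ℕ) (f : 𝓢(RV n, ℂ)) :
    pSemiE n α β f ≤ ENNReal.ofReal ((2 * Real.pi)⁻¹ ^ n) *
      ∫⁻ ξ, ‖schwartzD α (schwartzFT (schwartzD β f)) ξ‖ₑ := by
  refine iSup_le fun x => ?_
  rw [← coe_schwartzD, ← monomialMul_apply]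
  refine (enorm_le_lintegral_schwartzFT _ x).trans_eq ?_
  simp [schwartzD_schwartzFT]

lemma enorm_schwartzD_dilate_le {m : ℕ} {δ : Fin n → ℕ} {f : 𝓢(RV n, ℂ)} {P : ℝ≥0∞}
    (hzero : ∀ ζ, ∑ i, ζ i < m → schwartzD ζ f 0 = 0)
    (hP : ∀ ζ, ∑ i, ζ i = m ∨ ζ = δ → pSemiE n 0 ζ f ≤ P)
    {c : Fin n → ℝˣ} {τ : ℝ} (hτ0 : 0 < τ) (hτ1 : τ ≤ 1) (hc : ∀ i, |(c i : ℝ)| ≤ τ) (ξ : RV n) :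
    ‖schwartzD δ (dilate c f) ξ‖ₑ ≤
      ENNReal.ofReal (((n + 1) * τ) ^ m) * P *
        ENNReal.ofReal ((1 + ∑ i, ξ i ^ 2) ^ ((m : ℝ) / 2)) := by
  rcases eq_or_ne P ⊤ with rfl | hP_top
  · have hscale : 0 < ((n + 1) * τ) ^ m := by positivity
    have hweight : 0 < (1 + ∑ i, ξ i ^ 2) ^ ((m : ℝ) / 2) := by positivity
    rw [ENNReal.mul_top (ENNReal.ofReal_pos.2 hscale).ne',
      ENNReal.top_mul (ENNReal.ofReal_pos.2 hweight).ne']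
    exact le_top
  have hbound (ζ : Fin n → ℕ) (hζ : ∑ i, ζ i = m ∨ ζ = δ) (x : RV n) :
      ‖schwartzD ζ f x‖ ≤ P.toReal := by
    rw [← toReal_enorm]
    exact ENNReal.toReal_mono hP_top ((enorm_schwartzD_le_pSemiE ζ f x).trans (hP ζ hζ))
  have hle := ENNReal.ofReal_le_ofReal (norm_schwartzD_dilate_le hzero hbound hτ0.le hτ1 hc ξ)
  rwa [ofReal_norm, Fintype.card_fin, ENNReal.ofReal_mul (by positivity),
    ENNReal.ofReal_mul (by positivity), ENNReal.ofReal_toReal hP_top] at hle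

lemma lintegral_enorm_schwartzD_mul_dilate_le {m : ℕ} {α : Fin n → ℕ} {f g : 𝓢(RV n, ℂ)}
    {P Q : ℝ≥0∞} (hzero : ∀ ζ, ∑ i, ζ i < m → schwartzD ζ f 0 = 0)
    (hP : ∀ ζ, ∑ i, ζ i = m ∨ ζ ≤ α → pSemiE n 0 ζ f ≤ P) (hQ : ∀ γ ≤ α, qSemiE n m γ g ≤ Q)
    {c : Fin n → ℝˣ} {τ : ℝ} (hτ0 : 0 < τ) (hτ1 : τ ≤ 1) (hc : ∀ i, |(c i : ℝ)| ≤ τ) :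
    ∫⁻ ξ, ‖schwartzD α (schwartzMul (dilate c f) g) ξ‖ₑ ≤
      2 ^ (∑ i, α i) * (ENNReal.ofReal (((n + 1) * τ) ^ m) * P * Q) := by
  refine schwartzD_mul_le (N := fun h => ∫⁻ ξ, ‖h ξ‖ₑ) (fun h₁ h₂ => ?_) fun δ γ hδγ => ?_
  · rw [← lintegral_add_left h₁.continuous.measurable.enorm]
    exact lintegral_mono fun ξ => enorm_add_le _ _
  have hδ : δ ≤ α := hδγ ▸ le_self_add
  have hγ : γ ≤ α := hδγ ▸ le_add_self
  have hdilate := enorm_schwartzD_dilate_le hzero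
    (fun ζ hζ => hP ζ (hζ.imp_right fun h => h.trans_le hδ)) hτ0 hτ1 hc
  have hmeas : Measurable fun ξ : RV n =>
      ENNReal.ofReal ((1 + ∑ i, ξ i ^ 2) ^ ((m : ℝ) / 2)) * ‖schwartzD γ g ξ‖ₑ :=
    .mul (by fun_prop) (schwartzD γ g).continuous.measurable.enorm
  calc ∫⁻ ξ, ‖schwartzMul (schwartzD δ (dilate c f)) (schwartzD γ g) ξ‖ₑ
      ≤ ∫⁻ ξ, ENNReal.ofReal (((n + 1) * τ) ^ m) * P *
          (ENNReal.ofReal ((1 + ∑ i, ξ i ^ 2) ^ ((m : ℝ) / 2)) * ‖schwartzD γ g ξ‖ₑ) := by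
        refine lintegral_mono fun ξ => ?_
        rw [schwartzMul_apply, enorm_mul, ← mul_assoc]
        gcongr
        exact hdilate ξ
    _ = ENNReal.ofReal (((n + 1) * τ) ^ m) * P * qSemiE n m γ g := by
        rw [lintegral_const_mul _ hmeas, qSemiE_coe]
    _ ≤ ENNReal.ofReal (((n + 1) * τ) ^ m) * P * Q := by
        gcongr
        exact hQ γ hγ

lemma pSemiE_schwartzConv_dilate_le {m : ℕ} {α β : Fin n → ℕ} {μ ν : 𝓢(RV n, ℂ)} {P Q : ℝ≥0∞}
    (hzero : ∀ ζ, ∑ i, ζ i < m → schwartzD ζ (schwartzFT μ) 0 = 0)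
    (hP : ∀ ζ, ∑ i, ζ i = m ∨ ζ ≤ α → pSemiE n 0 ζ (schwartzFT μ) ≤ P)
    (hQ : ∀ γ ≤ α, qSemiE n m γ (schwartzFT (schwartzD β ν)) ≤ Q)
    {c : Fin n → ℝˣ} {τ : ℝ} (hτ0 : 0 < τ) (hτ1 : τ ≤ 1) (hc : ∀ i, |(c i : ℝ)| ≤ τ) :
    pSemiE n α β (schwartzConv (|∏ i, (c i : ℝ)|⁻¹ • dilate c⁻¹ μ) ν) ≤
      ENNReal.ofReal ((2 * Real.pi)⁻¹ ^ n) *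
        (2 ^ (∑ i, α i) * (ENNReal.ofReal (((n + 1) * τ) ^ m) * P * Q)) := by
  have hdet : |∏ i, (c i : ℝ)| ≠ 0 := by
    simp [Finset.prod_ne_zero_iff]
  have hFT : schwartzFT (|∏ i, (c i : ℝ)|⁻¹ • dilate c⁻¹ μ) = dilate c (schwartzFT μ) := by
    rw [schwartzFT.map_smul_of_tower, schwartzFT_dilate_inv, inv_smul_smul₀ hdet]
  refine (pSemiE_le_lintegral_schwartzFT α β _).trans ?_
  rw [schwartzFT_schwartzD_schwartzConv, hFT]
  gcongr
  exact lintegral_enorm_schwartzD_mul_dilate_le hzero hP hQ hτ0 hτ1 hc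

end Seminorms

lemma MomentCond.schwartzD_schwartzFT_eq_zero {n : ℕ} {M : ℤ} {μ : 𝓢(RV n, ℂ)}
    (hμ : MomentCond n M μ) {ζ : Fin n → ℕ} (hζ : ∑ i, ζ i < (M + 1).toNat) :
    schwartzD ζ (schwartzFT μ) 0 = 0 := by
  rw [coe_schwartzD, coe_schwartzFT]
  refine hμ ζ ?_
  rw [← Nat.cast_sum]
  lia

lemma coe_smul_dilate_rpow {n : ℕ} {a : Fin n → ℝ} {t : ℝ} (ht : 0 < t) {c : Fin n → ℝˣ}
    (hc : ∀ i, (c i : ℝ) = t ^ a i) (f : 𝓢(RV n, ℂ)) :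
    ⇑(|∏ i, (c i : ℝ)|⁻¹ • dilate c⁻¹ f) =
      fun x => ((t ^ (-(∑ i, a i)) : ℝ) : ℂ) * f (fun i => t ^ (-(a i)) * x i) := by
  have hdet : |∏ i, (c i : ℝ)|⁻¹ = t ^ (-(∑ i, a i)) := by
    simp only [hc]
    rw [← Real.rpow_sum_of_pos ht, abs_of_pos (Real.rpow_pos_of_pos ht _), Real.rpow_neg ht.le]
  ext x
  have hpoint : diagonalEquiv c⁻¹ x = fun i => t ^ (-(a i)) * x i := by
    ext i
    simp [hc, Real.rpow_neg ht.le]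
  rw [hdet, _root_.smul_apply, dilate_apply, hpoint, real_smul]

theorem stmt9_general (n : ℕ) (M : ℤ) (hM : -1 ≤ M) (α : Fin n → ℕ) :
    ∃ C : ℝ, 0 < C ∧
      ∀ (a : Fin n → ℝ) (a₀ : ℝ), 0 ≤ a₀ → (∀ i, a₀ ≤ a i) →
      ∀ β : Fin n → ℕ, ∀ t : ℝ, 0 < t → t ≤ 1 →
      ∀ ν μ : 𝓢(RV n, ℂ), MomentCond n M μ →
        pSemiE n α β
            (conv2 n (fun x => ((t ^ (-(∑ i, a i)) : ℝ) : ℂ) * μ (fun i => t ^ (-(a i)) * x i)) ν)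
          ≤ ENNReal.ofReal C * ENNReal.ofReal (t ^ (((M : ℝ) + 1) * a₀)) *
            (⨆ ζ : {ζ : Fin n → ℕ // (∑ i, (ζ i : ℤ)) ≤ M + 1 ∨ ζ ≤ α},
              pSemiE n 0 ζ.1 (FT n μ)) *
            (⨆ γ : {γ : Fin n → ℕ // γ ≤ α},
              qSemiE n ((M : ℝ) + 1) γ.1 (FT n (Dop n β ν))) := by
  set m := (M + 1).toNat
  have hmM : (m : ℤ) = M + 1 := Int.toNat_of_nonneg (by lia)
  have hmM' : (M : ℝ) + 1 = m := by exact_mod_cast hmM.symm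
  refine ⟨(2 * Real.pi)⁻¹ ^ n * 2 ^ (∑ i, α i) * (n + 1) ^ m, by positivity, ?_⟩
  intro a a₀ ha₀ ha β t ht ht1 ν μ hμ
  set c : Fin n → ℝˣ := fun i => Units.mk0 (t ^ a i) (Real.rpow_pos_of_pos ht _).ne'
  have hcoe (i : Fin n) : (c i : ℝ) = t ^ a i := rfl
  have hc (i : Fin n) : |(c i : ℝ)| ≤ t ^ a₀ :=
    (abs_of_pos (Real.rpow_pos_of_pos ht _)).trans_le
      (Real.rpow_le_rpow_of_exponent_ge ht ht1 (ha i))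
  rw [hmM', ← hmM, ← coe_smul_dilate_rpow ht hcoe, ← coe_schwartzConv, ← coe_schwartzD,
    ← coe_schwartzFT, ← coe_schwartzFT]
  have hP (ζ : Fin n → ℕ) (hζ : ∑ i, ζ i = m ∨ ζ ≤ α) := le_iSup
    (fun ζ : {ζ : Fin n → ℕ // (∑ i, (ζ i : ℤ)) ≤ m ∨ ζ ≤ α} => pSemiE n 0 ζ.1 (schwartzFT μ))
    ⟨ζ, hζ.imp_left fun h => by exact_mod_cast h.le⟩
  have hQ (γ : Fin n → ℕ) (hγ : γ ≤ α) := le_iSup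
    (fun γ : {γ : Fin n → ℕ // γ ≤ α} => qSemiE n m γ.1 (schwartzFT (schwartzD β ν))) ⟨γ, hγ⟩
  refine (pSemiE_schwartzConv_dilate_le (fun ζ => hμ.schwartzD_schwartzFT_eq_zero) hP hQ
    (Real.rpow_pos_of_pos ht a₀) (Real.rpow_le_one ht.le ht1 ha₀) hc).trans_eq ?_
  rw [mul_comm (m : ℝ), Real.rpow_mul_natCast ht.le, mul_pow, ENNReal.ofReal_mul (by positivity),
    ENNReal.ofReal_mul (by positivity), ENNReal.ofReal_mul (by positivity),
    ENNReal.ofReal_pow zero_le_two, ENNReal.ofReal_ofNat]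
  ring

/-- Lemma 3.5 (Bui-type estimate for convolutions with moment conditions). -/
theorem stmt9 (n : ℕ) (hn : 1 ≤ n) (a : Fin n → ℝ) (ha : ∀ i, 1 ≤ a i)
    (M : ℤ) (hM : -1 ≤ M) (α β : Fin n → ℕ) :
    ∃ C : ℝ, 0 < C ∧
      ∀ t : ℝ, 0 < t → t ≤ 1 →
      ∀ ν μ : SchwartzMap (RV n) ℂ, MomentCond n M (⇑μ) →
        pSemiE n α β
            (conv2 n
              (fun x => ((t ^ (-(∑ i, a i)) : ℝ) : ℂ) * μ (fun i => t ^ (-(a i)) * x i))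
              (⇑ν))
          ≤ ENNReal.ofReal C * ENNReal.ofReal (t ^ (((M:ℝ) + 1) * ⨅ i, a i)) *
            (⨆ ζ : {ζ : Fin n → ℕ // (∑ i, (ζ i : ℤ)) ≤ M + 1 ∨ ζ ≤ α},
              pSemiE n 0 ζ.1 (FT n (⇑μ))) *
            (⨆ γ : {γ : Fin n → ℕ // γ ≤ α},
              qSemiE n ((M:ℝ) + 1) γ.1 (FT n (Dop n β (⇑ν)))) := by
  obtain ⟨C, hC, hle⟩ := stmt9_general n M hM α
  exact ⟨C, hC, hle a _ (Real.iInf_nonneg fun i => zero_le_one.trans (ha i))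
    (ciInf_le (Set.finite_range a).bddBelow) β⟩
end
end
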